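/- Let t > 0 and let S_t = −diag(√t/2, √t/2, √t/2, √t/2, (1−t)/(2√t), (1−t)/(2√t)) ∈ M₆(ℝ). Then for each i = 1,…,6, the spin representation applied to the matrix Λ_t(Xᵢ) satisfies ρ(Λ_t(Xᵢ))·s₅ = c(S_t uᵢ)·s₅, where u₁,…,u₆ is the standard basis of ℝ⁶ and Λ_t(X₁) = (√t/2)(F₃₅+F₄₆), Λ_t(X₂) = (√t/2)(F₄₅−F₃₆), Λ_t(X₃) = (√t/2)(F₂₆−F₁₅), Λ_t(X₄) = −(√t/2)(F₁₆+F₂₅), Λ_t(X₅) = ((1−t)/(2√t))(F₁₃+F₂₄), Λ_t(X₆) = ((1−t)/(2√t))(F₁₄−F₂₃). In particular ⟨ρ(Λ_t(Xᵢ))·s₅, s₆⟩ = 0 for all i (the one-form η of the SU(3)-structure on ℂP³ vanishes). -/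

import Mathlib

/- STATEMENT 17: For t > 0 and S_t = −diag(√t/2, √t/2, √t/2, √t/2,
(1−t)/(2√t), (1−t)/(2√t)), for each i = 1,…,6 the spin representation satisfies
ρ(Λ_t(Xᵢ))·s₅ = c(S_t uᵢ)·s₅; in particular ⟨ρ(Λ_t(Xᵢ))·s₅, s₆⟩ = 0 (the
one-form η of the SU(3)-structure on ℂP³ vanishes).
(0-based indices: s 4 = s₅, s 5 = s₆.) -/

open Matrix

noncomputable section

namespace Stmt17

def E (i j : Fin 8) : Matrix (Fin 8) (Fin 8) ℝ :=
  Matrix.of fun k l => if k = i ∧ l = j then (-1 : ℝ) else if k = j ∧ l = i then 1 else 0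

def e : Fin 6 → Matrix (Fin 8) (Fin 8) ℝ :=
  ![E 0 7 + E 1 6 - E 2 5 - E 3 4,
    -E 0 6 + E 1 7 + E 2 4 - E 3 5,
    -E 0 5 + E 1 4 - E 2 7 + E 3 6,
    -E 0 4 - E 1 5 - E 2 6 - E 3 7,
    -E 0 2 - E 1 3 + E 4 6 + E 5 7,
    E 0 3 - E 1 2 - E 4 7 + E 5 6]

/-- Clifford multiplication by the vector `X ∈ ℝ⁶`. -/
def c (X : Fin 6 → ℝ) : Matrix (Fin 8) (Fin 8) ℝ := ∑ a, X a • e a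

def F (a b : Fin 6) : Matrix (Fin 6) (Fin 6) ℝ :=
  Matrix.of fun k l => if k = a ∧ l = b then (-1 : ℝ) else if k = b ∧ l = a then 1 else 0

/-- The differential of the spin representation `so(6) → M₈(ℝ)`: the linear map
determined by `ρ (F a b) = (1/2) eₐ * e_b` for `a < b`. -/
def ρ (A : Matrix (Fin 6) (Fin 6) ℝ) : Matrix (Fin 8) (Fin 8) ℝ :=
  (4⁻¹ : ℝ) • ∑ p, ∑ q, A q p • (e p * e q)

def s (i : Fin 8) : Fin 8 → ℝ := Pi.single i 1

/-- The standard basis `u₁, …, u₆` of `ℝ⁶` (0-based). -/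
def u (i : Fin 6) : Fin 6 → ℝ := Pi.single i 1

/-- The Levi-Civita connection of the metric `g_t` on `ℂP³ = SO(5)/U(2)`. -/
def Λ (t : ℝ) : Fin 6 → Matrix (Fin 6) (Fin 6) ℝ :=
  ![(Real.sqrt t / 2) • (F 2 4 + F 3 5),
    (Real.sqrt t / 2) • (F 3 4 - F 2 5),
    (Real.sqrt t / 2) • (F 1 5 - F 0 4),
    -((Real.sqrt t / 2) • (F 0 5 + F 1 4)),
    ((1 - t) / (2 * Real.sqrt t)) • (F 0 2 + F 1 3),
    ((1 - t) / (2 * Real.sqrt t)) • (F 0 3 - F 1 2)]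

/-- `S_t = −diag(√t/2, √t/2, √t/2, √t/2, (1−t)/(2√t), (1−t)/(2√t))`. -/
def S (t : ℝ) : Matrix (Fin 6) (Fin 6) ℝ :=
  -Matrix.diagonal ![Real.sqrt t / 2, Real.sqrt t / 2, Real.sqrt t / 2, Real.sqrt t / 2,
    (1 - t) / (2 * Real.sqrt t), (1 - t) / (2 * Real.sqrt t)]

lemma e0_apply (v : Fin 8 → ℝ) :
    e 0 *ᵥ v = ![-v 7, -v 6, v 5, v 4, -v 3, -v 2, v 1, v 0] := by
  ext k
  fin_cases k <;> simp [e, E, Matrix.mulVec, dotProduct]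

lemma e1_apply (v : Fin 8 → ℝ) :
    e 1 *ᵥ v = ![v 6, -v 7, -v 4, v 5, v 2, -v 3, -v 0, v 1] := by
  ext k
  fin_cases k <;> simp [e, E, Matrix.mulVec, dotProduct]

lemma e2_apply (v : Fin 8 → ℝ) :
    e 2 *ᵥ v = ![v 5, -v 4, v 7, -v 6, v 1, -v 0, v 3, -v 2] := by
  ext k
  fin_cases k <;> simp [e, E, Matrix.mulVec, dotProduct]

lemma e3_apply (v : Fin 8 → ℝ) :
    e 3 *ᵥ v = ![v 4, v 5, v 6, v 7, -v 0, -v 1, -v 2, -v 3] := by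
  ext k
  fin_cases k <;> simp [e, E, Matrix.mulVec, dotProduct]

lemma e4_apply (v : Fin 8 → ℝ) :
    e 4 *ᵥ v = ![v 2, v 3, -v 0, -v 1, -v 6, -v 7, v 4, v 5] := by
  ext k
  fin_cases k <;> simp [e, E, Matrix.mulVec, dotProduct]

lemma e5_apply (v : Fin 8 → ℝ) :
    e 5 *ᵥ v = ![-v 3, v 2, -v 1, v 0, v 7, -v 6, v 5, -v 4] := by
  ext k
  fin_cases k <;> simp [e, E, Matrix.mulVec, dotProduct]

lemma ρ_apply (A : Matrix (Fin 6) (Fin 6) ℝ) (v : Fin 8 → ℝ) :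
    ρ A *ᵥ v = (4⁻¹ : ℝ) • ∑ p, ∑ q, A q p • (e p *ᵥ (e q *ᵥ v)) := by
  simp only [ρ, Matrix.smul_mulVec, Matrix.sum_mulVec, Matrix.mulVec_mulVec]

lemma c_apply (X : Fin 6 → ℝ) (v : Fin 8 → ℝ) :
    c X *ᵥ v = ∑ a, X a • (e a *ᵥ v) := by
  simp only [c, Matrix.smul_mulVec, Matrix.sum_mulVec]

lemma S_u (t : ℝ) (i : Fin 6) : S t *ᵥ u i = fun a => S t a i := by
  ext a
  simp [u]

lemma s_four : s 4 = ![0, 0, 0, 0, 1, 0, 0, 0] := by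
  ext k
  fin_cases k <;> simp [s]

set_option maxHeartbeats 4000000 in
lemma key (t : ℝ) : ∀ i : Fin 6,
      (ρ (Λ t i)).mulVec (s 4) = (c ((S t).mulVec (u i))).mulVec (s 4) := by
  intro i
  rw [ρ_apply, c_apply, S_u, s_four]
  simp only [Fin.sum_univ_six, e0_apply, e1_apply, e2_apply, e3_apply, e4_apply, e5_apply]
  fin_cases i
  all_goals
    ext k
    fin_cases k <;> simp [Λ, F, S, Matrix.diagonal] <;> ring

theorem CP3_intrinsic_torsion_eta_vanishes (t : ℝ) (ht : 0 < t) :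
    ∀ i : Fin 6,
      (ρ (Λ t i)).mulVec (s 4) = (c ((S t).mulVec (u i))).mulVec (s 4) ∧
      (ρ (Λ t i)).mulVec (s 4) ⬝ᵥ s 5 = 0 := by
  intro i
  refine ⟨key t i, ?_⟩
  rw [key, c_apply, S_u, s_four]
  simp only [Fin.sum_univ_six, e0_apply, e1_apply, e2_apply, e3_apply, e4_apply, e5_apply]
  simp [s]

end Stmt17
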